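/- Sandwich bound for the approximate marginal gain: let P ⊆ {1,…,m} with |P| < k, let γ_P ∈ Γ_≤(1_P,(k/n)𝟙) be a coupling attaining f(P), and let j ∈ {1,…,m} with j ∉ P. Then α_{j,min} ≤ f̂(x_j ∣ P) ≤ f(P ∪ {j}) − f(P). -/

import Mathlib

open Finset

noncomputable section

/-- Frobenius inner product `⟨S, γ⟩ = Σ_{i,j} S_{ij} γ_{ij}`. -/
def dotS {m n : ℕ} (S γ : Fin m → Fin n → ℝ) : ℝ := ∑ i, ∑ j, S i j * γ i j

/-- Transport polytope with equality marginals. -/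
def Gamma {m n : ℕ} (μ : Fin m → ℝ) (ν : Fin n → ℝ) : Set (Fin m → Fin n → ℝ) :=
  {γ | (∀ i j, 0 ≤ γ i j) ∧ (∀ i, ∑ j, γ i j = μ i) ∧ (∀ j, ∑ i, γ i j = ν j)}

/-- Semi-relaxed transport polytope: target marginal constraint is `≤`. -/
def GammaLe {m n : ℕ} (μ : Fin m → ℝ) (ν : Fin n → ℝ) : Set (Fin m → Fin n → ℝ) :=
  {γ | (∀ i j, 0 ≤ γ i j) ∧ (∀ i, ∑ j, γ i j = μ i) ∧ (∀ j, ∑ i, γ i j ≤ ν j)}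

/-- Indicator vector of a subset `P ⊆ {1,…,m}`. -/
def indVec {m : ℕ} (P : Finset (Fin m)) : Fin m → ℝ := fun i => if i ∈ P then 1 else 0

/-- `h(P) = max_{γ ∈ Γ(1_P, (|P|/n)𝟙)} ⟨S, γ⟩`. -/
def hval {m n : ℕ} (S : Fin m → Fin n → ℝ) (P : Finset (Fin m)) : ℝ :=
  sSup (dotS S '' Gamma (indVec P) (fun _ => (P.card : ℝ) / (n : ℝ)))

/-- `f(P) = max_{γ ∈ Γ_≤(1_P, (k/n)𝟙)} ⟨S, γ⟩`. -/
def fval {m n : ℕ} (k : ℕ) (S : Fin m → Fin n → ℝ) (P : Finset (Fin m)) : ℝ :=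
  sSup (dotS S '' GammaLe (indVec P) (fun _ => (k : ℝ) / (n : ℝ)))

/-- Sum of the `t` largest entries of `s`, as the maximum of `∑_{i ∈ T} s i`
over subsets `T` of cardinality `t`. -/
def topSum {n : ℕ} (t : ℕ) (s : Fin n → ℝ) : ℝ :=
  sSup {x : ℝ | ∃ T : Finset (Fin n), T.card = t ∧ x = ∑ i ∈ T, s i}

/-- Sum of the `t` smallest entries of `s`, as the minimum of `∑_{i ∈ T} s i`
over subsets `T` of cardinality `t`. -/
def botSum {n : ℕ} (t : ℕ) (s : Fin n → ℝ) : ℝ :=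
  sInf {x : ℝ | ∃ T : Finset (Fin n), T.card = t ∧ x = ∑ i ∈ T, s i}

/-- `α_{j,max} = (1/⌊n/k⌋)·(sum of the ⌊n/k⌋ largest entries of row j of S)`. -/
def alphaMax {m n : ℕ} (k : ℕ) (S : Fin m → Fin n → ℝ) (j : Fin m) : ℝ :=
  (1 / ((n / k : ℕ) : ℝ)) * topSum (n / k) (S j)

/-- `α_{j,min} = (1/⌊n/k⌋)·(sum of the ⌊n/k⌋ smallest entries of row j of S)`. -/
def alphaMin {m n : ℕ} (k : ℕ) (S : Fin m → Fin n → ℝ) (j : Fin m) : ℝ :=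
  (1 / ((n / k : ℕ) : ℝ)) * botSum (n / k) (S j)

/-- Approximate marginal gain
`f̂(x_j ∣ P) = max{⟨S(j,·), v⟩ : v ≥ 0, 𝟙ᵀv = 1, v ≤ (k/n)𝟙 − γ_Pᵀ𝟙}`. -/
def fhat {m n : ℕ} (k : ℕ) (S : Fin m → Fin n → ℝ)
    (γP : Fin m → Fin n → ℝ) (j : Fin m) : ℝ :=
  sSup {x : ℝ | ∃ v : Fin n → ℝ, (∀ i, 0 ≤ v i) ∧ (∑ i, v i = 1) ∧
    (∀ i, v i ≤ (k : ℝ) / (n : ℝ) - ∑ l, γP l i) ∧ x = ∑ i, S j i * v i}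

/-!
A vector feasible for `f̂` is a row that fits into the capacity left over by `γ_P`. Since row `j` of
`γ_P` vanishes, adding it there gives a coupling for `P ∪ {j}`, hence the upper bound.

For the lower bound, the left-over capacity has mass `k - |P| ≥ 1`, so a unit-mass vector fits into
it. Its entries are at most `k / n ≤ 1 / ⌊n / k⌋`, and a unit mass spread that thinly costs least
when it sits uniformly on the `⌊n / k⌋` smallest entries of the row.
-/

section ThresholdBound

variable {ι : Type*} [Fintype ι]

theorem exists_card_eq_forall_le_of_notMem {α : Type*} [LinearOrder α] (s : ι → α) {t : ℕ}
    (ht : t ≤ Fintype.card ι) :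
    ∃ T : Finset ι, #T = t ∧ ∀ i ∈ T, ∀ l ∉ T, s i ≤ s l := by
  classical
  induction t with
  | zero => exact ⟨∅, by simp⟩
  | succ t ih =>
    obtain ⟨T, hcard, hT⟩ := ih (by lia)
    have hne : Tᶜ.Nonempty := by rw [← card_pos, card_compl]; lia
    obtain ⟨b, hb, hbmin⟩ := exists_min_image Tᶜ s hne
    rw [mem_compl] at hb
    refine ⟨insert b T, by rw [card_insert_of_notMem hb, hcard], fun i hi l hl => ?_⟩
    rw [mem_insert, not_or] at hl
    rcases mem_insert.1 hi with rfl | hi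
    · exact hbmin l (mem_compl.2 hl.2)
    · exact hT i hi l hl.2

theorem mul_sum_le_sum_mul_of_threshold {R : Type*} [CommRing R] [LinearOrder R]
    [IsStrictOrderedRing R] {s v : ι → R} {a c : R} {T : Finset ι}
    (hle : ∀ i ∈ T, s i ≤ a) (hge : ∀ i ∉ T, a ≤ s i) (hv : ∀ i, 0 ≤ v i)
    (hvc : ∀ i ∈ T, v i ≤ c) (hsum : ∑ i, v i = c * #T) :
    c * ∑ i ∈ T, s i ≤ ∑ i, s i * v i := by
  -- Both sides have the same mass, so `s` may be shifted by the threshold `a`.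
  have hshift : ∑ i ∈ T, (s i - a) * c ≤ ∑ i, (s i - a) * v i :=
    calc ∑ i ∈ T, (s i - a) * c
      _ ≤ ∑ i ∈ T, (s i - a) * v i := sum_le_sum fun i hi =>
          mul_le_mul_of_nonpos_left (hvc i hi) (sub_nonpos.2 (hle i hi))
      _ ≤ ∑ i, (s i - a) * v i := sum_le_sum_of_subset_of_nonneg (subset_univ T)
          fun i _ hi => mul_nonneg (sub_nonneg.2 (hge i hi)) (hv i)
  simp only [← sum_mul, sub_mul, sum_sub_distrib, ← mul_sum, hsum, sum_const, nsmul_eq_mul]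
    at hshift
  linarith

end ThresholdBound

section CappedSimplex

variable {ι : Type*} [Fintype ι]

/-- The capped simplex: the probability vectors on `ι` bounded entrywise by the capacity `c`. It
is the feasible set in the definition of `f̂`, with `c` the left-over capacity. -/
def cappedSimplex (c : ι → ℝ) : Set (ι → ℝ) := stdSimplex ℝ ι ∩ Set.Iic c

theorem cappedSimplex_mono : Monotone (cappedSimplex (ι := ι)) :=
  fun _ _ h => Set.inter_subset_inter_right _ (Set.Iic_subset_Iic.2 h)

theorem cappedSimplex_nonempty {c : ι → ℝ} (hc : 0 ≤ c) (hsum : 1 ≤ ∑ i, c i) :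
    (cappedSimplex c).Nonempty := by
  have hpos : 0 < ∑ i, c i := one_pos.trans_le hsum
  refine ⟨fun i => c i / ∑ l, c l, ⟨fun i => div_nonneg (hc i) hpos.le, ?_⟩,
    fun i => div_le_self (hc i) hsum⟩
  rw [← sum_div, div_self hpos.ne']

theorem bddAbove_sum_mul_image_cappedSimplex (s c : ι → ℝ) :
    BddAbove ((fun v => ∑ i, s i * v i) '' cappedSimplex c) :=
  ((isCompact_stdSimplex ℝ ι).bddAbove_image (by fun_prop)).mono
    (Set.image_mono Set.inter_subset_left)

end CappedSimplex

section SmallestEntries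

variable {m n k t : ℕ}

theorem botSum_le_sum (s : Fin n → ℝ) (T : Finset (Fin n)) : botSum #T s ≤ ∑ i ∈ T, s i := by
  refine csInf_le (Set.Finite.bddBelow ?_) ⟨T, rfl, rfl⟩
  refine (Set.finite_range fun U : Finset (Fin n) => ∑ i ∈ U, s i).subset ?_
  rintro _ ⟨U, -, rfl⟩
  exact ⟨U, rfl⟩

theorem one_div_mul_botSum_le_sum_mul (ht : 0 < t) (htn : t ≤ n) (s : Fin n → ℝ) {v : Fin n → ℝ}
    (hv : v ∈ cappedSimplex fun _ => 1 / (t : ℝ)) :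
    1 / (t : ℝ) * botSum t s ≤ ∑ i, s i * v i := by
  obtain ⟨⟨hv_nonneg, hv_sum⟩, hv_le⟩ := hv
  obtain ⟨T, rfl, hT⟩ :=
    exists_card_eq_forall_le_of_notMem s (htn.trans_eq (Fintype.card_fin n).symm)
  obtain ⟨b, hb, hbmax⟩ := exists_max_image T s (card_pos.1 ht)
  have hmass : ∑ i, v i = 1 / (#T : ℝ) * #T := by
    rw [hv_sum, one_div_mul_cancel (Nat.cast_ne_zero.2 ht.ne')]
  calc 1 / (#T : ℝ) * botSum #T s
    _ ≤ 1 / (#T : ℝ) * ∑ i ∈ T, s i := by gcongr; exact botSum_le_sum s T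
    _ ≤ ∑ i, s i * v i :=
        mul_sum_le_sum_mul_of_threshold hbmax (hT b hb) hv_nonneg (fun i _ => hv_le i) hmass

theorem alphaMin_le_sum_mul (hk : 0 < k) (hkn : k ≤ n) (S : Fin m → Fin n → ℝ) (j : Fin m)
    {v : Fin n → ℝ} (hv : v ∈ cappedSimplex fun _ => (k : ℝ) / n) :
    alphaMin k S j ≤ ∑ i, S j i * v i := by
  have ht : 0 < n / k := Nat.div_pos hkn hk
  have hcap : (k : ℝ) / n ≤ 1 / (n / k : ℕ) := by
    rw [div_le_div_iff₀ (Nat.cast_pos.2 (hk.trans_le hkn)) (Nat.cast_pos.2 ht), one_mul]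
    exact_mod_cast Nat.mul_div_le n k
  exact one_div_mul_botSum_le_sum_mul ht (Nat.div_le_self n k) (S j)
    (cappedSimplex_mono (fun _ => hcap) hv)

end SmallestEntries

section Coupling

variable {m n : ℕ} {μ : Fin m → ℝ} {ν : Fin n → ℝ} {γ : Fin m → Fin n → ℝ}

/-- The residual capacity `ν - γᵀ𝟙` that the coupling `γ` leaves in each column. -/
def residualCapacity (ν : Fin n → ℝ) (γ : Fin m → Fin n → ℝ) : Fin n → ℝ :=
  fun i => ν i - ∑ l, γ l i

theorem residualCapacity_nonneg (hγ : γ ∈ GammaLe μ ν) : 0 ≤ residualCapacity ν γ :=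
  fun i => sub_nonneg.2 (hγ.2.2 i)

theorem residualCapacity_le (hγ : γ ∈ GammaLe μ ν) : residualCapacity ν γ ≤ ν :=
  fun i => sub_le_self _ (sum_nonneg fun l _ => hγ.1 l i)

theorem sum_residualCapacity (hγ : γ ∈ GammaLe μ ν) :
    ∑ i, residualCapacity ν γ i = ∑ i, ν i - ∑ l, μ l := by
  simp only [residualCapacity, sum_sub_distrib]
  rw [sum_comm, sum_congr rfl fun l _ => hγ.2.1 l]

theorem add_single_mem_gammaLe (hγ : γ ∈ GammaLe μ ν) (j : Fin m) {v : Fin n → ℝ} (hv : 0 ≤ v)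
    (hvle : v ≤ residualCapacity ν γ) :
    γ + Pi.single j v ∈ GammaLe (μ + Pi.single j (∑ i, v i)) ν := by
  refine ⟨fun l i => ?_, fun l => ?_, fun i => ?_⟩
  · have hsingle : (0 : Fin m → Fin n → ℝ) ≤ Pi.single j v := Pi.single_nonneg.2 hv
    exact add_nonneg (hγ.1 l i) (hsingle l i)
  · simp only [Pi.add_apply, sum_add_distrib, hγ.2.1 l]
    rcases eq_or_ne l j with rfl | hl <;> simp [*]
  · have hcol : ∑ l, (Pi.single j v : Fin m → Fin n → ℝ) l i = v i := by
      rw [← Finset.sum_apply, Fintype.sum_pi_single']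
    simp only [Pi.add_apply, sum_add_distrib, hcol]
    exact le_sub_iff_add_le'.1 (hvle i)

theorem dotS_add (S γ δ : Fin m → Fin n → ℝ) : dotS S (γ + δ) = dotS S γ + dotS S δ := by
  simp only [dotS, Pi.add_apply, mul_add, sum_add_distrib]

theorem dotS_single (S : Fin m → Fin n → ℝ) (j : Fin m) (v : Fin n → ℝ) :
    dotS S (Pi.single j v) = ∑ i, S j i * v i := by
  unfold dotS
  rw [Fintype.sum_eq_single j fun l hl => by simp [hl], Pi.single_eq_same]

theorem bddAbove_dotS_image_gammaLe (S : Fin m → Fin n → ℝ) (μ : Fin m → ℝ) (ν : Fin n → ℝ) :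
    BddAbove (dotS S '' GammaLe μ ν) := by
  refine ⟨∑ l, ∑ i, |S l i| * ν i, ?_⟩
  rintro _ ⟨γ, ⟨hγ, -, hcol⟩, rfl⟩
  refine sum_le_sum fun l _ => sum_le_sum fun i _ => ?_
  have hentry : γ l i ≤ ν i :=
    (single_le_sum (f := fun l => γ l i) (fun l _ => hγ l i) (mem_univ l)).trans (hcol i)
  calc S l i * γ l i
    _ ≤ |S l i| * γ l i := mul_le_mul_of_nonneg_right (le_abs_self _) (hγ l i)
    _ ≤ |S l i| * ν i := mul_le_mul_of_nonneg_left hentry (abs_nonneg _)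

end Coupling

section MarginalGain

variable {m n k : ℕ} {γ : Fin m → Fin n → ℝ} {P : Finset (Fin m)} {j : Fin m}

theorem sum_indVec (P : Finset (Fin m)) : ∑ l, indVec P l = #P := by
  simp [indVec]

theorem indVec_insert (hj : j ∉ P) : indVec (insert j P) = indVec P + Pi.single j 1 := by
  ext l
  rcases eq_or_ne l j with rfl | hl <;> simp [indVec, *]

theorem fhat_eq_sSup_image (k : ℕ) (S γ : Fin m → Fin n → ℝ) (j : Fin m) :
    fhat k S γ j = sSup ((fun v => ∑ i, S j i * v i) ''
      cappedSimplex (residualCapacity (fun _ => (k : ℝ) / n) γ)) := by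
  unfold fhat
  congr 1
  ext x
  constructor
  · rintro ⟨v, hv_nonneg, hv_sum, hv_le, rfl⟩
    exact ⟨v, ⟨⟨hv_nonneg, hv_sum⟩, hv_le⟩, rfl⟩
  · rintro ⟨v, ⟨⟨hv_nonneg, hv_sum⟩, hv_le⟩, rfl⟩
    exact ⟨v, hv_nonneg, hv_sum, hv_le, rfl⟩

theorem cappedSimplex_residualCapacity_nonempty (hn : n ≠ 0) (hP : #P < k)
    (hγ : γ ∈ GammaLe (indVec P) fun _ => (k : ℝ) / n) :
    (cappedSimplex (residualCapacity (fun _ => (k : ℝ) / n) γ)).Nonempty := by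
  have hcard : (#P : ℝ) + 1 ≤ k := by exact_mod_cast hP
  refine cappedSimplex_nonempty (residualCapacity_nonneg hγ) ?_
  rw [sum_residualCapacity hγ, sum_indVec, Fin.sum_const, nsmul_eq_mul,
    mul_div_cancel₀ _ (Nat.cast_ne_zero.2 hn)]
  linarith

theorem dotS_add_sum_mul_le_fval_insert (S : Fin m → Fin n → ℝ)
    (hγ : γ ∈ GammaLe (indVec P) fun _ => (k : ℝ) / n) (hj : j ∉ P) {v : Fin n → ℝ}
    (hv : v ∈ cappedSimplex (residualCapacity (fun _ => (k : ℝ) / n) γ)) :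
    dotS S γ + ∑ i, S j i * v i ≤ fval k S (insert j P) := by
  obtain ⟨⟨hv_nonneg, hv_sum⟩, hv_le⟩ := hv
  have hmem := add_single_mem_gammaLe hγ j hv_nonneg hv_le
  rw [hv_sum, ← indVec_insert hj] at hmem
  rw [← dotS_single, ← dotS_add]
  exact le_csSup (bddAbove_dotS_image_gammaLe S _ _) (Set.mem_image_of_mem _ hmem)

theorem alphaMin_le_fhat (hkn : k ≤ n) (S : Fin m → Fin n → ℝ) (hP : #P < k)
    (hγ : γ ∈ GammaLe (indVec P) fun _ => (k : ℝ) / n) (j : Fin m) :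
    alphaMin k S j ≤ fhat k S γ j := by
  obtain ⟨v, hv⟩ := cappedSimplex_residualCapacity_nonempty (by lia) hP hγ
  calc alphaMin k S j
    _ ≤ ∑ i, S j i * v i :=
        alphaMin_le_sum_mul (by lia) hkn S j (cappedSimplex_mono (residualCapacity_le hγ) hv)
    _ ≤ fhat k S γ j := by
        rw [fhat_eq_sSup_image]
        exact le_csSup (bddAbove_sum_mul_image_cappedSimplex _ _) (Set.mem_image_of_mem _ hv)

theorem fhat_le_fval_insert_sub_dotS (hn : n ≠ 0) (S : Fin m → Fin n → ℝ) (hP : #P < k)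
    (hγ : γ ∈ GammaLe (indVec P) fun _ => (k : ℝ) / n) (hj : j ∉ P) :
    fhat k S γ j ≤ fval k S (insert j P) - dotS S γ := by
  rw [fhat_eq_sSup_image]
  refine csSup_le ((cappedSimplex_residualCapacity_nonempty hn hP hγ).image _) ?_
  rintro _ ⟨v, hv, rfl⟩
  exact le_sub_iff_add_le'.2 (dotS_add_sum_mul_le_fval_insert S hγ hj hv)

end MarginalGain

theorem stmt_17_general {m n k : ℕ} (hkn : k ≤ n) (S : Fin m → Fin n → ℝ)
    {P : Finset (Fin m)} (hP : #P < k) {γ : Fin m → Fin n → ℝ}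
    (hγ : γ ∈ GammaLe (indVec P) fun _ => (k : ℝ) / n) {j : Fin m} (hj : j ∉ P) :
    alphaMin k S j ≤ fhat k S γ j ∧
      fhat k S γ j ≤ fval k S (insert j P) - dotS S γ :=
  ⟨alphaMin_le_fhat hkn S hP hγ j, fhat_le_fval_insert_sub_dotS (by lia) S hP hγ hj⟩

/-- sandwich bound
`α_{j,min} ≤ f̂(x_j ∣ P) ≤ f(P ∪ {j}) − f(P)`. -/
theorem stmt_17 (m n k : ℕ) (hm : 0 < m) (hn : 0 < n) (hk : 0 < k)
    (hkm : k ≤ m) (hkn : k ≤ n)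
    (S : Fin m → Fin n → ℝ) (hS : ∀ i j, 0 ≤ S i j)
    (P : Finset (Fin m)) (hP : P.card < k)
    (γP : Fin m → Fin n → ℝ)
    (hγ : γP ∈ GammaLe (indVec P) (fun _ => (k : ℝ) / (n : ℝ)))
    (hopt : dotS S γP = fval k S P)
    (j : Fin m) (hj : j ∉ P) :
    alphaMin k S j ≤ fhat k S γP j ∧
    fhat k S γP j ≤ fval k S (insert j P) - fval k S P := by
  rw [← hopt]
  exact stmt_17_general hkn S hP hγ hj
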